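/- (Watson's transformation of a terminating very-well-poised ₈φ₇ into a terminating balanced ₄φ₃) Let q, a, b, c, d, e be complex numbers and n a nonnegative integer, with all denominator factors below nonzero. Then ∑_{k=0}^{n} ((1 - a q^{2k})/(1 - a)) · ((a;q)_k (b;q)_k (c;q)_k (d;q)_k (e;q)_k (q^{-n};q)_k / ((q;q)_k (aq/b;q)_k (aq/c;q)_k (aq/d;q)_k (aq/e;q)_k (aq^{n+1};q)_k)) (a² q^{2+n}/(bcde))^k = ((aq;q)_n (aq/(de);q)_n / ((aq/d;q)_n (aq/e;q)_n)) · ∑_{k=0}^{n} ((q^{-n};q)_k (d;q)_k (e;q)_k (aq/(bc);q)_k / ((q;q)_k (aq/b;q)_k (aq/c;q)_k (d e q^{-n}/a;q)_k)) q^k. -/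

import Mathlib

/-- The finite q-shifted factorial `(a;q)_k = ∏_{j=0}^{k-1} (1 - a q^j)`. -/
noncomputable def qPoch (a q : ℂ) (k : ℕ) : ℂ := ∏ j ∈ Finset.range k, (1 - a * q ^ j)

/-! Bailey's lemma, a consequence of Saalschütz's sum, turns a Bailey pair into a new one. Starting
from the unit pair, whose `β`-sequence is `1, 0, 0, …`, apply the lemma with parameters `b, c` and
then with `d, e`: the defining relation of the resulting pair at `n` is Watson's transformation.

A Bailey pair has `(aq;q)_{2n}` in its denominators, while the transformation itself only needs
`(aq^{n+1};q)_n ≠ 0`. The finitely many remaining values of `a` are reached by letting `a` vary: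
both sides are continuous and agree in a punctured neighbourhood. -/

open Finset Filter Topology

section QShiftedFactorial

variable {a q z : ℂ} {k n : ℕ}

@[simp]
lemma qPoch_zero (a q : ℂ) : qPoch a q 0 = 1 := by simp [qPoch]

lemma qPoch_succ (a q : ℂ) (k : ℕ) : qPoch a q (k + 1) = qPoch a q k * (1 - a * q ^ k) :=
  prod_range_succ _ _

lemma qPoch_add (a q : ℂ) (m k : ℕ) :
    qPoch a q (m + k) = qPoch a q m * qPoch (a * q ^ m) q k := by
  simp only [qPoch, prod_range_add, pow_add, mul_assoc]

lemma qPoch_ne_zero_of_le (h : qPoch a q n ≠ 0) (hk : k ≤ n) : qPoch a q k ≠ 0 := by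
  obtain ⟨m, rfl⟩ := Nat.exists_eq_add_of_le hk
  exact left_ne_zero_of_mul (qPoch_add a q k m ▸ h)

lemma qPoch_ne_zero_iff : qPoch a q n ≠ 0 ↔ ∀ k ∈ range n, 1 - a * q ^ k ≠ 0 :=
  prod_ne_zero_iff

lemma one_sub_mul_pow_ne_zero (h : qPoch a q n ≠ 0) (hk : k < n) : 1 - a * q ^ k ≠ 0 :=
  qPoch_ne_zero_iff.1 h k (mem_range.2 hk)

lemma one_sub_pow_succ_ne_zero (h : qPoch q q n ≠ 0) (hk : k < n) : 1 - q ^ (k + 1) ≠ 0 := by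
  simpa only [pow_succ'] using one_sub_mul_pow_ne_zero h hk

lemma neg_one_pow_mul_pow_choose_two_succ (q : ℂ) (k : ℕ) :
    (-1) ^ (k + 1) * q ^ (k + 1).choose 2 = (-1) ^ k * q ^ k.choose 2 * -q ^ k := by
  rw [Nat.choose_succ_succ' k 1, Nat.choose_one_right, pow_add, pow_succ]
  ring

lemma qPoch_mul_qPoch_sub (hq : q ≠ 0) (hz : z ≠ 0) (hk : k ≤ n) :
    qPoch (q ^ (-(n : ℤ)) / z) q k * qPoch (z * q) q (n - k) * (z * q ^ n) ^ k =
      (-1) ^ k * q ^ k.choose 2 * qPoch (z * q) q n := by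
  induction k with
  | zero => simp
  | succ k ih =>
    obtain ⟨m, rfl⟩ := Nat.exists_eq_add_of_le hk
    have hfactor : (1 - q ^ (-((k + 1 + m : ℕ) : ℤ)) / z * q ^ k) * (z * q ^ (k + 1 + m)) =
        (1 - z * q * q ^ m) * -q ^ k := by
      rw [zpow_neg, zpow_natCast]
      field_simp
      ring
    specialize ih (by lia)
    rw [show k + 1 + m - k = m + 1 by lia, qPoch_succ (z * q)] at ih
    rw [neg_one_pow_mul_pow_choose_two_succ, Nat.add_sub_cancel_left, qPoch_succ, pow_succ]
    linear_combination (-q ^ k) * ih + qPoch (q ^ (-((k + 1 + m : ℕ) : ℤ)) / z) q k *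
      qPoch (z * q) q m * (z * q ^ (k + 1 + m)) ^ k * hfactor

lemma qPoch_zpow_neg_mul_pow (hq : q ≠ 0) (hqn : qPoch q q n ≠ 0) (hk : k ≤ n) :
    qPoch (q ^ (-(n : ℤ))) q k * (q ^ n) ^ k =
      qPoch q q n / qPoch q q (n - k) * ((-1) ^ k * q ^ k.choose 2) := by
  have h := qPoch_mul_qPoch_sub hq one_ne_zero hk
  simp only [div_one, one_mul] at h
  rw [div_mul_eq_mul_div, eq_div_iff (qPoch_ne_zero_of_le hqn (n.sub_le k))]
  linear_combination h

lemma qPoch_sub_div_qPoch_sub_mul_pow (hq : q ≠ 0) (hz : z ≠ 0) (hqn : qPoch q q n ≠ 0)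
    (hzn : qPoch (q ^ (-(n : ℤ)) / z) q k ≠ 0) (hk : k ≤ n) :
    qPoch (z * q) q (n - k) / qPoch q q (n - k) * (z * q) ^ k * qPoch q q n =
      qPoch (q ^ (-(n : ℤ))) q k / qPoch (q ^ (-(n : ℤ)) / z) q k * q ^ k *
        qPoch (z * q) q n := by
  have hnum := qPoch_mul_qPoch_sub hq hz hk
  have hden := qPoch_zpow_neg_mul_pow hq hqn hk
  have hqnk : (q ^ n) ^ k ≠ 0 := by positivity
  rw [mul_pow] at hnum
  generalize qPoch (q ^ (-(n : ℤ)) / z) q k = w at *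
  apply mul_right_cancel₀ (mul_ne_zero hzn hqnk)
  calc
    _ = (w * qPoch (z * q) q (n - k) * (z ^ k * (q ^ n) ^ k)) *
        (qPoch q q n / qPoch q q (n - k)) * q ^ k := by rw [mul_pow]; ring
    _ = qPoch (q ^ (-(n : ℤ))) q k * (q ^ n) ^ k * qPoch (z * q) q n * q ^ k := by
      rw [hnum, hden]; ring
    _ = _ := by field_simp

end QShiftedFactorial

section Saalschutz

variable {q d e x : ℂ} {n j : ℕ}

/-- The summand of the terminating balanced `₃φ₂` series, scaled by `(x;q)_n / (q;q)_n` and with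
`(q⁻ⁿ;q)_j / (q¹⁻ⁿ/x;q)_j` reversed, so that no negative power of `q` occurs. -/
noncomputable def saalschutzTerm (q d e x : ℂ) (n j : ℕ) : ℂ :=
  qPoch d q j * qPoch e q j * qPoch x q (n - j) * x ^ j /
    (qPoch q q j * qPoch q q (n - j) * qPoch (d * e * x) q j)

lemma saalschutzTerm_succ_left (hq : qPoch q q (n + 1) ≠ 0) (hj : j ≤ n) :
    (1 - q ^ (n + 1 - j)) * saalschutzTerm q d e x (n + 1) j =
      (1 - x * q ^ (n - j)) * saalschutzTerm q d e x n j := by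
  obtain ⟨m, rfl⟩ := Nat.exists_eq_add_of_le hj
  have hm : 1 - q * q ^ m ≠ 0 := one_sub_mul_pow_ne_zero hq (by lia)
  simp only [saalschutzTerm, show j + m + 1 - j = m + 1 by lia, Nat.add_sub_cancel_left,
    qPoch_succ, pow_succ', div_eq_mul_inv, mul_inv]
  linear_combination (qPoch d q j * qPoch e q j * qPoch x q m * (1 - x * q ^ m) * x ^ j *
    (qPoch q q j)⁻¹ * (qPoch q q m)⁻¹ * (qPoch (d * e * x) q j)⁻¹) * mul_inv_cancel₀ hm

lemma saalschutzTerm_succ_succ (hq : 1 - q * q ^ j ≠ 0) (hx : 1 - d * e * x * q ^ j ≠ 0) :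
    (1 - q ^ (j + 1)) * (1 - d * e * x * q ^ j) * saalschutzTerm q d e x (n + 1) (j + 1) =
      x * (1 - d * q ^ j) * (1 - e * q ^ j) * saalschutzTerm q d e x n j := by
  have hcancel : (1 - q * q ^ j) * (1 - d * e * x * q ^ j) *
      ((1 - q * q ^ j)⁻¹ * (1 - d * e * x * q ^ j)⁻¹) = 1 := by
    rw [mul_mul_mul_comm, mul_inv_cancel₀ hq, mul_inv_cancel₀ hx, one_mul]
  simp only [saalschutzTerm, Nat.add_sub_add_right, qPoch_succ, pow_succ', div_eq_mul_inv, mul_inv]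
  linear_combination (qPoch d q j * (1 - d * q ^ j) * qPoch e q j * (1 - e * q ^ j) *
    qPoch x q (n - j) * x * x ^ j * (qPoch q q j)⁻¹ * (qPoch q q (n - j))⁻¹ *
    (qPoch (d * e * x) q j)⁻¹) * hcancel

/- With `C = d e x`, the `j`-th summand is split by
`(1 - q^{n+1})(1 - C q^n) =
  (1 - q^{n+1-j})(1 - C q^{n+j}) + q^{n+1-j} (1 - q^j)(1 - C q^{j-1})`,
whose two parts lower `(n + 1, j)` to `(n, j)` and to `(n, j - 1)`. -/
lemma sum_saalschutzTerm_succ (hq : qPoch q q (n + 1) ≠ 0)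
    (hx : qPoch (d * e * x) q (n + 1) ≠ 0) :
    (1 - q ^ (n + 1)) * (1 - d * e * x * q ^ n) *
        ∑ j ∈ range (n + 2), saalschutzTerm q d e x (n + 1) j =
      (1 - d * x * q ^ n) * (1 - e * x * q ^ n) *
        ∑ j ∈ range (n + 1), saalschutzTerm q d e x n j := by
  have hfirst : ∑ j ∈ range (n + 2), (1 - d * e * x * q ^ (n + j)) *
        ((1 - q ^ (n + 1 - j)) * saalschutzTerm q d e x (n + 1) j) =
      ∑ j ∈ range (n + 1), (1 - d * e * x * q ^ (n + j)) *
        ((1 - x * q ^ (n - j)) * saalschutzTerm q d e x n j) := by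
    rw [sum_range_succ, Nat.sub_self, pow_zero, sub_self, zero_mul, mul_zero, add_zero]
    refine sum_congr rfl fun j hj => ?_
    rw [saalschutzTerm_succ_left hq (mem_range_succ_iff.1 hj)]
  have hsecond : ∑ j ∈ range (n + 2), ((1 - q ^ (n + 1)) * (1 - d * e * x * q ^ n) -
        (1 - d * e * x * q ^ (n + j)) * (1 - q ^ (n + 1 - j))) *
          saalschutzTerm q d e x (n + 1) j =
      ∑ j ∈ range (n + 1), q ^ (n - j) *
        (x * (1 - d * q ^ j) * (1 - e * q ^ j) * saalschutzTerm q d e x n j) := by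
    rw [sum_range_succ', add_zero, Nat.sub_zero,
      mul_comm (1 - q ^ (n + 1)) (1 - d * e * x * q ^ n), sub_self, zero_mul, add_zero]
    refine sum_congr rfl fun j hj => ?_
    obtain ⟨m, rfl⟩ := Nat.exists_eq_add_of_le (mem_range_succ_iff.1 hj)
    rw [← saalschutzTerm_succ_succ (one_sub_mul_pow_ne_zero hq (mem_range.1 hj))
      (one_sub_mul_pow_ne_zero hx (mem_range.1 hj)), Nat.add_sub_cancel_left,
      show j + m + 1 - (j + 1) = m by lia]
    ring
  calc
    _ = ∑ j ∈ range (n + 1), (1 - d * e * x * q ^ (n + j)) *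
            ((1 - x * q ^ (n - j)) * saalschutzTerm q d e x n j) +
          ∑ j ∈ range (n + 1), q ^ (n - j) *
            (x * (1 - d * q ^ j) * (1 - e * q ^ j) * saalschutzTerm q d e x n j) := by
      rw [← hfirst, ← hsecond, ← sum_add_distrib, mul_sum]
      exact sum_congr rfl fun j _ => by ring
    _ = _ := by
      rw [← sum_add_distrib, mul_sum]
      refine sum_congr rfl fun j hj => ?_
      obtain ⟨m, rfl⟩ := Nat.exists_eq_add_of_le (mem_range_succ_iff.1 hj)
      rw [Nat.add_sub_cancel_left]
      ring

theorem sum_saalschutzTerm (hq : qPoch q q n ≠ 0) (hx : qPoch (d * e * x) q n ≠ 0) :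
    ∑ j ∈ range (n + 1), saalschutzTerm q d e x n j =
      qPoch (d * x) q n * qPoch (e * x) q n / (qPoch q q n * qPoch (d * e * x) q n) := by
  induction n with
  | zero => simp [saalschutzTerm]
  | succ n ih =>
    have hstep := sum_saalschutzTerm_succ hq hx
    rw [ih (qPoch_ne_zero_of_le hq n.le_succ) (qPoch_ne_zero_of_le hx n.le_succ)] at hstep
    have hqn := one_sub_pow_succ_ne_zero hq n.lt_succ_self
    have hxn := one_sub_mul_pow_ne_zero hx n.lt_succ_self
    apply mul_left_cancel₀ (mul_ne_zero hqn hxn)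
    rw [hstep]
    simp only [qPoch_succ, ← pow_succ']
    generalize 1 - d * e * x * q ^ n = w at *
    field_simp

end Saalschutz

section BaileyPair

variable {q a ρ σ : ℂ} {α β : ℕ → ℂ} {n N : ℕ}

/-- `(α, β)` is a Bailey pair relative to `a`. The defining relation is truncated at `N`, because
`(q;q)_n` and `(aq;q)_{2n}` are only known to be nonzero for small `n`. -/
def IsBaileyPair (q a : ℂ) (N : ℕ) (α β : ℕ → ℂ) : Prop :=
  ∀ n ≤ N, β n = ∑ r ∈ range (n + 1), α r / (qPoch q q (n - r) * qPoch (a * q) q (n + r))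

/-- The `α`-sequence of the unit Bailey pair, whose `β`-sequence is `1, 0, 0, …`. -/
noncomputable def unitBaileyAlpha (q a : ℂ) (r : ℕ) : ℂ :=
  (1 - a * q ^ (2 * r)) / (1 - a) * (qPoch a q r / qPoch q q r) * ((-1) ^ r * q ^ r.choose 2)

/-- The `α`-sequence produced by Bailey's lemma with parameters `ρ` and `σ`. -/
noncomputable def baileyAlpha (q a ρ σ : ℂ) (α : ℕ → ℂ) (r : ℕ) : ℂ :=
  qPoch ρ q r * qPoch σ q r / (qPoch (a * q / ρ) q r * qPoch (a * q / σ) q r) *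
    (a * q / (ρ * σ)) ^ r * α r

/-- The `β`-sequence produced by Bailey's lemma with parameters `ρ` and `σ`. -/
noncomputable def baileyBeta (q a ρ σ : ℂ) (β : ℕ → ℂ) (n : ℕ) : ℂ :=
  (∑ k ∈ range (n + 1), qPoch ρ q k * qPoch σ q k *
      (qPoch (a * q / (ρ * σ)) q (n - k) / qPoch q q (n - k) * (a * q / (ρ * σ)) ^ k) * β k) /
    (qPoch (a * q / ρ) q n * qPoch (a * q / σ) q n)

/-- The summand in the defining relation of the unit Bailey pair, without its very-well-poised
factor `(1 - a q^{2r}) / (1 - a)`. -/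
noncomputable def unitBaileyWeight (q a : ℂ) (n r : ℕ) : ℂ :=
  (-1) ^ r * q ^ r.choose 2 * qPoch a q r /
    (qPoch q q r * qPoch q q (n - r) * qPoch (a * q) q (n + r))

lemma unitBaileyWeight_succ (hq : qPoch q q n ≠ 0) {r : ℕ} (hr : r < n)
    (ha : 1 - a * q ^ (n + r + 1) ≠ 0) :
    (1 - q ^ (r + 1)) * (1 - a * q ^ (n + r + 1)) * unitBaileyWeight q a n (r + 1) =
      -q ^ r * (1 - a * q ^ r) * (1 - q ^ (n - r)) * unitBaileyWeight q a n r := by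
  obtain ⟨m, rfl⟩ := Nat.exists_eq_add_of_lt hr
  have hr₀ := one_sub_pow_succ_ne_zero hq hr
  have hm₀ := one_sub_pow_succ_ne_zero hq (show m < r + m + 1 by lia)
  simp only [unitBaileyWeight, neg_one_pow_mul_pow_choose_two_succ,
    show r + m + 1 - r = m + 1 by lia, show r + m + 1 - (r + 1) = m by lia, ← add_assoc,
    qPoch_succ, mul_assoc a q, ← pow_succ']
  generalize 1 - q ^ (r + 1) = u at *
  generalize 1 - q ^ (m + 1) = v at *
  generalize 1 - a * q ^ (r + m + 1 + r + 1) = w at *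
  field_simp

lemma sum_unitBaileyWeight (hn : n ≠ 0) (hq : qPoch q q n ≠ 0)
    (ha : qPoch (a * q) q (2 * n) ≠ 0) :
    ∑ r ∈ range (n + 1), (1 - a * q ^ (2 * r)) * unitBaileyWeight q a n r = 0 := by
  have hqn : 1 - q ^ n ≠ 0 := by
    obtain ⟨m, rfl⟩ := Nat.exists_eq_succ_of_ne_zero hn
    exact one_sub_pow_succ_ne_zero hq m.lt_succ_self
  let F (r : ℕ) : ℂ := (1 - q ^ r) * (1 - a * q ^ (n + r)) * unitBaileyWeight q a n r
  -- `(1 - q^n)(1 - a q^{2r}) = (1 - q^r)(1 - a q^{n+r}) + q^r (1 - a q^r)(1 - q^{n-r})`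
  have htelescope : ∀ r ∈ range n,
      (1 - q ^ n) * ((1 - a * q ^ (2 * r)) * unitBaileyWeight q a n r) = F r - F (r + 1) := by
    intro r hr
    have hr := mem_range.1 hr
    have har : 1 - a * q ^ (n + r + 1) ≠ 0 := by
      simpa only [mul_assoc, ← pow_succ'] using
        one_sub_mul_pow_ne_zero ha (show n + r < 2 * n by lia)
    simp only [F, ← add_assoc]
    rw [unitBaileyWeight_succ hq hr har]
    obtain ⟨m, rfl⟩ := Nat.exists_eq_add_of_lt hr
    rw [show r + m + 1 - r = m + 1 by lia]
    ring
  apply (mul_eq_zero_iff_left hqn).1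
  calc
    _ = ∑ r ∈ range n, (F r - F (r + 1)) + F n := by
      rw [mul_sum, sum_range_succ, sum_congr rfl htelescope, two_mul, ← mul_assoc]
    _ = F 0 := by rw [sum_range_sub', sub_add_cancel]
    _ = 0 := by simp only [F, pow_zero, sub_self, zero_mul]

theorem isBaileyPair_unit (ha1 : a ≠ 1) (hq : qPoch q q N ≠ 0)
    (ha : qPoch (a * q) q (2 * N) ≠ 0) :
    IsBaileyPair q a N (unitBaileyAlpha q a) (Pi.single 0 1) := by
  intro n hn
  rcases eq_or_ne n 0 with rfl | hn₀
  · simp [unitBaileyAlpha, sub_ne_zero.2 ha1.symm]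
  · rw [Pi.single_eq_of_ne hn₀]
    symm
    calc
      _ = (1 - a)⁻¹ * ∑ r ∈ range (n + 1), (1 - a * q ^ (2 * r)) * unitBaileyWeight q a n r := by
        rw [mul_sum]
        refine sum_congr rfl fun r _ => ?_
        simp only [unitBaileyAlpha, unitBaileyWeight, div_eq_mul_inv, mul_inv]
        ring
      _ = 0 := by
        rw [sum_unitBaileyWeight hn₀ (qPoch_ne_zero_of_le hq hn)
          (qPoch_ne_zero_of_le ha (by lia)), mul_zero]

lemma sum_Ico_bailey_coefficients {d e x : ℂ} {r : ℕ} (hr : r ≤ n) (hq : qPoch q q (n - r) ≠ 0)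
    (hx : qPoch (d * e * x) q (n + r) ≠ 0) (hd : qPoch (d * x) q r ≠ 0)
    (he : qPoch (e * x) q r ≠ 0) :
    ∑ k ∈ Ico r (n + 1), qPoch d q k * qPoch e q k *
        (qPoch x q (n - k) / qPoch q q (n - k) * x ^ k) /
          (qPoch q q (k - r) * qPoch (d * e * x) q (k + r)) =
      qPoch d q r * qPoch e q r / (qPoch (d * x) q r * qPoch (e * x) q r) * x ^ r *
        (qPoch (d * x) q n * qPoch (e * x) q n) /
          (qPoch q q (n - r) * qPoch (d * e * x) q (n + r)) := by
  obtain ⟨m, rfl⟩ := Nat.exists_eq_add_of_le hr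
  rw [Nat.add_sub_cancel_left] at hq ⊢
  rw [show r + m + r = 2 * r + m by lia] at hx ⊢
  have hshift : d * q ^ r * (e * q ^ r) * x = d * e * x * q ^ (2 * r) := by ring
  have hx' : qPoch (d * q ^ r * (e * q ^ r) * x) q m ≠ 0 := by
    rw [hshift]
    exact right_ne_zero_of_mul (qPoch_add (d * e * x) q (2 * r) m ▸ hx)
  calc
    _ = qPoch d q r * qPoch e q r * x ^ r / qPoch (d * e * x) q (2 * r) *
        ∑ j ∈ range (m + 1), saalschutzTerm q (d * q ^ r) (e * q ^ r) x m j := by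
      rw [mul_sum, sum_Ico_eq_sum_range, show r + m + 1 - r = m + 1 by lia]
      refine sum_congr rfl fun j _ => ?_
      rw [Nat.add_sub_add_left, Nat.add_sub_cancel_left, show r + j + r = 2 * r + j by lia]
      simp only [saalschutzTerm, qPoch_add, hshift, pow_add x, div_eq_mul_inv, mul_inv]
      ring
    _ = _ := by
      rw [sum_saalschutzTerm hq hx', hshift, mul_right_comm d, mul_right_comm e]
      simp only [qPoch_add]
      generalize qPoch (d * x) q r = u at *
      generalize qPoch (e * x) q r = v at *
      field_simp

theorem IsBaileyPair.baileyAlpha_baileyBeta (h : IsBaileyPair q a N α β) (hρ : ρ ≠ 0) (hσ : σ ≠ 0)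
    (hq : qPoch q q N ≠ 0) (ha : qPoch (a * q) q (2 * N) ≠ 0)
    (hρN : qPoch (a * q / ρ) q N ≠ 0) (hσN : qPoch (a * q / σ) q N ≠ 0) :
    IsBaileyPair q a N (baileyAlpha q a ρ σ α) (baileyBeta q a ρ σ β) := by
  intro n hn
  have hρn := qPoch_ne_zero_of_le hρN hn
  have hσn := qPoch_ne_zero_of_le hσN hn
  let x := a * q / (ρ * σ)
  have haq : a * q = ρ * σ * x := by simp only [x]; field_simp
  have hσx : a * q / ρ = σ * x := by simp only [x]; field_simp
  have hρx : a * q / σ = ρ * x := by simp only [x]; field_simp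
  let K (k r : ℕ) : ℂ := qPoch ρ q k * qPoch σ q k *
    (qPoch x q (n - k) / qPoch q q (n - k) * x ^ k) /
      (qPoch q q (k - r) * qPoch (a * q) q (k + r))
  have hK : ∀ r ∈ range (n + 1), α r * ∑ k ∈ Ico r (n + 1), K k r =
      (qPoch (a * q / ρ) q n * qPoch (a * q / σ) q n) *
        (baileyAlpha q a ρ σ α r / (qPoch q q (n - r) * qPoch (a * q) q (n + r))) := by
    intro r hr
    have hr := mem_range_succ_iff.1 hr
    simp only [K, haq, baileyAlpha]
    rw [sum_Ico_bailey_coefficients hr (qPoch_ne_zero_of_le hq (by lia))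
      (haq ▸ qPoch_ne_zero_of_le ha (by lia)) (hρx ▸ qPoch_ne_zero_of_le hσn hr)
      (hσx ▸ qPoch_ne_zero_of_le hρn hr), ← haq, hρx, hσx]
    ring
  rw [baileyBeta, div_eq_iff (mul_ne_zero hρn hσn)]
  calc
    _ = ∑ k ∈ range (n + 1), ∑ r ∈ range (k + 1), α r * K k r := by
      refine sum_congr rfl fun k hk => ?_
      rw [h k ((mem_range_succ_iff.1 hk).trans hn), mul_sum]
      refine sum_congr rfl fun r _ => ?_
      simp only [K, x]
      ring
    _ = ∑ r ∈ range (n + 1), α r * ∑ k ∈ Ico r (n + 1), K k r := by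
      simp only [mul_sum, range_eq_Ico, sum_Ico_Ico_comm]
    _ = _ := by rw [sum_congr rfl hK, ← mul_sum, mul_comm]

lemma baileyBeta_single (q a ρ σ : ℂ) (n : ℕ) :
    baileyBeta q a ρ σ (Pi.single 0 1) n =
      qPoch (a * q / (ρ * σ)) q n /
        (qPoch q q n * (qPoch (a * q / ρ) q n * qPoch (a * q / σ) q n)) := by
  rw [baileyBeta, sum_eq_single_of_mem 0 (by simp) fun k _ hk => by simp [hk]]
  simp [div_div]

end BaileyPair

section Watson

variable {q a b c d e : ℂ} {n : ℕ}

/-- The terminating very-well-poised `₈φ₇` series on the left of Watson's transformation. -/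
noncomputable def veryWellPoisedSum (q a b c d e : ℂ) (n : ℕ) : ℂ :=
  ∑ k ∈ range (n + 1),
    (1 - a * q ^ (2 * k)) / (1 - a) *
      (qPoch a q k * qPoch b q k * qPoch c q k * qPoch d q k * qPoch e q k *
          qPoch (q ^ (-(n : ℤ))) q k /
        (qPoch q q k * qPoch (a * q / b) q k * qPoch (a * q / c) q k *
          qPoch (a * q / d) q k * qPoch (a * q / e) q k *
            qPoch (a * q ^ (n + 1)) q k)) *
      (a ^ 2 * q ^ (2 + n) / (b * c * d * e)) ^ k

/-- The terminating balanced `₄φ₃` series on the right of Watson's transformation. -/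
noncomputable def balancedSum (q a b c d e : ℂ) (n : ℕ) : ℂ :=
  ∑ k ∈ range (n + 1),
    qPoch (q ^ (-(n : ℤ))) q k * qPoch d q k * qPoch e q k *
        qPoch (a * q / (b * c)) q k /
      (qPoch q q k * qPoch (a * q / b) q k * qPoch (a * q / c) q k *
        qPoch (d * e * q ^ (-(n : ℤ)) / a) q k) * q ^ k

/-- The prefactor of the `₄φ₃` series in Watson's transformation. -/
noncomputable def watsonFactor (q a d e : ℂ) (n : ℕ) : ℂ :=
  qPoch (a * q) q n * qPoch (a * q / (d * e)) q n /
    (qPoch (a * q / d) q n * qPoch (a * q / e) q n)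

lemma veryWellPoisedSum_eq_sum_baileyAlpha (hq : q ≠ 0) (hqn : qPoch q q n ≠ 0)
    (ha : qPoch (a * q) q n ≠ 0) :
    veryWellPoisedSum q a b c d e n = qPoch q q n * qPoch (a * q) q n *
      ∑ r ∈ range (n + 1), baileyAlpha q a d e (baileyAlpha q a b c (unitBaileyAlpha q a)) r /
        (qPoch q q (n - r) * qPoch (a * q) q (n + r)) := by
  rw [veryWellPoisedSum, mul_sum]
  refine sum_congr rfl fun k hk => ?_
  have hratio : (qPoch (a * q ^ (n + 1)) q k)⁻¹ = qPoch (a * q) q n / qPoch (a * q) q (n + k) := by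
    rw [qPoch_add, div_mul_cancel_left₀ ha, pow_succ', mul_assoc]
  calc
    _ = (1 - a * q ^ (2 * k)) / (1 - a) *
        (qPoch a q k * qPoch b q k * qPoch c q k * qPoch d q k * qPoch e q k /
          (qPoch q q k * qPoch (a * q / b) q k * qPoch (a * q / c) q k *
            qPoch (a * q / d) q k * qPoch (a * q / e) q k)) *
        ((a * q / (b * c)) ^ k * (a * q / (d * e)) ^ k) *
        (qPoch (q ^ (-(n : ℤ))) q k * (q ^ n) ^ k) * (qPoch (a * q ^ (n + 1)) q k)⁻¹ := by
      have hpow : (a ^ 2 * q ^ (2 + n) / (b * c * d * e)) ^ k =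
          (a * q / (b * c)) ^ k * (a * q / (d * e)) ^ k * (q ^ n) ^ k := by
        rw [← mul_pow, ← mul_pow]; ring
      rw [hpow]; ring
    _ = _ := by
      rw [qPoch_zpow_neg_mul_pow hq hqn (mem_range_succ_iff.1 hk), hratio]
      simp only [baileyAlpha, unitBaileyAlpha]
      ring

lemma watsonFactor_mul_balancedSum (hq : q ≠ 0) (ha : a ≠ 0) (hd : d ≠ 0) (he : e ≠ 0)
    (hqn : qPoch q q n ≠ 0) (hden : qPoch (d * e * q ^ (-(n : ℤ)) / a) q n ≠ 0) :
    watsonFactor q a d e n * balancedSum q a b c d e n = qPoch q q n * qPoch (a * q) q n *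
      baileyBeta q a d e (baileyBeta q a b c (Pi.single 0 1)) n := by
  rw [watsonFactor, balancedSum, baileyBeta, mul_sum, sum_div, mul_sum]
  refine sum_congr rfl fun k hk => ?_
  have hk := mem_range_succ_iff.1 hk
  have hz : a / (d * e) * q = a * q / (d * e) := div_mul_eq_mul_div ..
  have hw : q ^ (-(n : ℤ)) / (a / (d * e)) = d * e * q ^ (-(n : ℤ)) / a := by
    rw [div_div_eq_mul_div, mul_comm]
  have hreverse := qPoch_sub_div_qPoch_sub_mul_pow hq (div_ne_zero ha (mul_ne_zero hd he)) hqn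
    (hw ▸ qPoch_ne_zero_of_le hden hk) hk
  rw [hz, hw] at hreverse
  rw [baileyBeta_single]
  linear_combination (-qPoch (a * q) q n * qPoch d q k * qPoch e q k *
    (qPoch (a * q / (b * c)) q k /
      (qPoch q q k * (qPoch (a * q / b) q k * qPoch (a * q / c) q k))) /
    (qPoch (a * q / d) q n * qPoch (a * q / e) q n)) * hreverse

theorem veryWellPoisedSum_eq_of_qPoch_ne_zero (hq : q ≠ 0) (ha1 : a ≠ 1) (ha : a ≠ 0) (hb : b ≠ 0)
    (hc : c ≠ 0) (hd : d ≠ 0) (he : e ≠ 0) (hqn : qPoch q q n ≠ 0)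
    (hbn : qPoch (a * q / b) q n ≠ 0) (hcn : qPoch (a * q / c) q n ≠ 0)
    (hdn : qPoch (a * q / d) q n ≠ 0) (hen : qPoch (a * q / e) q n ≠ 0)
    (hden : qPoch (d * e * q ^ (-(n : ℤ)) / a) q n ≠ 0) (haq : qPoch (a * q) q (2 * n) ≠ 0) :
    veryWellPoisedSum q a b c d e n = watsonFactor q a d e n * balancedSum q a b c d e n := by
  have hpair₁ := (isBaileyPair_unit ha1 hqn haq).baileyAlpha_baileyBeta hb hc hqn haq hbn hcn
  have hpair₂ := hpair₁.baileyAlpha_baileyBeta hd he hqn haq hdn hen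
  rw [veryWellPoisedSum_eq_sum_baileyAlpha hq hqn (qPoch_ne_zero_of_le haq (by lia)),
    watsonFactor_mul_balancedSum hq ha hd he hqn hden, hpair₂ n le_rfl]

@[fun_prop]
lemma continuousAt_qPoch {f : ℂ → ℂ} {t : ℂ} {k : ℕ} (hf : ContinuousAt f t) :
    ContinuousAt (fun s => qPoch (f s) q k) t := by
  unfold qPoch
  fun_prop

lemma eventually_qPoch_mul_ne_zero (q a : ℂ) (m : ℕ) :
    ∀ᶠ t in 𝓝[≠] a, qPoch (t * q) q m ≠ 0 := by
  simp only [qPoch_ne_zero_iff, mul_assoc, ← pow_succ']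
  refine (eventually_all_finset _).2 fun j _ => ?_
  have hne : ∀ᶠ t in 𝓝[≠] a, t ≠ (q ^ (j + 1))⁻¹ := by
    rcases eq_or_ne a (q ^ (j + 1))⁻¹ with rfl | h
    · exact self_mem_nhdsWithin
    · exact eventually_ne_nhdsWithin h
  filter_upwards [hne] with t ht h
  exact ht (eq_inv_of_mul_eq_one_left (sub_eq_zero.1 h).symm)

lemma continuousAt_veryWellPoisedSum (ha1 : a ≠ 1) (hqn : qPoch q q n ≠ 0)
    (hbn : qPoch (a * q / b) q n ≠ 0) (hcn : qPoch (a * q / c) q n ≠ 0)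
    (hdn : qPoch (a * q / d) q n ≠ 0) (hen : qPoch (a * q / e) q n ≠ 0)
    (han : qPoch (a * q ^ (n + 1)) q n ≠ 0) :
    ContinuousAt (fun t => veryWellPoisedSum q t b c d e n) a := by
  refine tendsto_finsetSum _ fun k hk => ?_
  have hnonzero {x : ℂ} (hx : qPoch x q n ≠ 0) : qPoch x q k ≠ 0 :=
    qPoch_ne_zero_of_le hx (mem_range_succ_iff.1 hk)
  refine ContinuousAt.mul (.mul (.div ?_ ?_ (sub_ne_zero.2 ha1.symm)) (.div ?_ ?_ ?_)) ?_
  case refine_5 => simp [*]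
  all_goals fun_prop

lemma continuousAt_watsonFactor (hdn : qPoch (a * q / d) q n ≠ 0)
    (hen : qPoch (a * q / e) q n ≠ 0) :
    ContinuousAt (fun t => watsonFactor q t d e n) a := by
  unfold watsonFactor
  fun_prop (disch := simp [*])

lemma continuousAt_balancedSum (ha : a ≠ 0) (hqn : qPoch q q n ≠ 0)
    (hbn : qPoch (a * q / b) q n ≠ 0) (hcn : qPoch (a * q / c) q n ≠ 0)
    (hden : qPoch (d * e * q ^ (-(n : ℤ)) / a) q n ≠ 0) :
    ContinuousAt (fun t => balancedSum q t b c d e n) a := by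
  refine tendsto_finsetSum _ fun k hk => ?_
  have hnonzero {x : ℂ} (hx : qPoch x q n ≠ 0) : qPoch x q k ≠ 0 :=
    qPoch_ne_zero_of_le hx (mem_range_succ_iff.1 hk)
  refine ContinuousAt.mul (.div ?_ ?_ ?_) ?_
  case refine_3 => simp [-zpow_neg, *]
  all_goals fun_prop (disch := exact ha)

lemma eventually_veryWellPoisedSum_eq (hq : q ≠ 0) (ha1 : a ≠ 1) (ha : a ≠ 0) (hb : b ≠ 0)
    (hc : c ≠ 0) (hd : d ≠ 0) (he : e ≠ 0) (hqn : qPoch q q n ≠ 0)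
    (hbn : qPoch (a * q / b) q n ≠ 0) (hcn : qPoch (a * q / c) q n ≠ 0)
    (hdn : qPoch (a * q / d) q n ≠ 0) (hen : qPoch (a * q / e) q n ≠ 0)
    (hden : qPoch (d * e * q ^ (-(n : ℤ)) / a) q n ≠ 0) :
    ∀ᶠ t in 𝓝[≠] a,
      veryWellPoisedSum q t b c d e n = watsonFactor q t d e n * balancedSum q t b c d e n := by
  have hpersist (f : ℂ → ℂ) (hf : ContinuousAt f a) (h : qPoch (f a) q n ≠ 0) :
      ∀ᶠ t in 𝓝[≠] a, qPoch (f t) q n ≠ 0 :=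
    ((continuousAt_qPoch hf).eventually_ne h).filter_mono nhdsWithin_le_nhds
  filter_upwards [eventually_qPoch_mul_ne_zero q a (2 * n), eventually_ne_nhdsWithin ha1,
    eventually_ne_nhdsWithin ha, hpersist (· * q / b) (by fun_prop) hbn,
    hpersist (· * q / c) (by fun_prop) hcn, hpersist (· * q / d) (by fun_prop) hdn,
    hpersist (· * q / e) (by fun_prop) hen,
    hpersist (d * e * q ^ (-(n : ℤ)) / ·) (by fun_prop (disch := exact ha)) hden]
    with t htq ht1 ht0 htb htc htd hte htden
  exact veryWellPoisedSum_eq_of_qPoch_ne_zero hq ht1 ht0 hb hc hd he hqn htb htc htd hte htden htq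

end Watson

/-- Watson's transformation of a terminating very-well-poised ₈φ₇ series into a
terminating balanced ₄φ₃ series, assuming nonzero denominator factors. -/
theorem watson_transformation (q a b c d e : ℂ) (n : ℕ)
    (hq : q ≠ 0) (ha1 : a ≠ 1) (ha : a ≠ 0)
    (hb : b ≠ 0) (hc : c ≠ 0) (hd : d ≠ 0) (he : e ≠ 0)
    (hden : ∀ k ≤ n, qPoch q q k ≠ 0 ∧ qPoch (a * q / b) q k ≠ 0 ∧
      qPoch (a * q / c) q k ≠ 0 ∧ qPoch (a * q / d) q k ≠ 0 ∧
      qPoch (a * q / e) q k ≠ 0 ∧ qPoch (a * q ^ (n + 1)) q k ≠ 0 ∧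
      qPoch (d * e * q ^ (-(n : ℤ)) / a) q k ≠ 0) :
    ∑ k ∈ Finset.range (n + 1),
        (1 - a * q ^ (2 * k)) / (1 - a) *
          (qPoch a q k * qPoch b q k * qPoch c q k * qPoch d q k * qPoch e q k *
              qPoch (q ^ (-(n : ℤ))) q k /
            (qPoch q q k * qPoch (a * q / b) q k * qPoch (a * q / c) q k *
              qPoch (a * q / d) q k * qPoch (a * q / e) q k *
                qPoch (a * q ^ (n + 1)) q k)) *
          (a ^ 2 * q ^ (2 + n) / (b * c * d * e)) ^ k =
      qPoch (a * q) q n * qPoch (a * q / (d * e)) q n /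
          (qPoch (a * q / d) q n * qPoch (a * q / e) q n) *
        ∑ k ∈ Finset.range (n + 1),
          qPoch (q ^ (-(n : ℤ))) q k * qPoch d q k * qPoch e q k *
              qPoch (a * q / (b * c)) q k /
            (qPoch q q k * qPoch (a * q / b) q k * qPoch (a * q / c) q k *
              qPoch (d * e * q ^ (-(n : ℤ)) / a) q k) * q ^ k := by
  obtain ⟨hqn, hbn, hcn, hdn, hen, han, hwn⟩ := hden n le_rfl
  have hlhs := continuousAt_veryWellPoisedSum ha1 hqn hbn hcn hdn hen han
  have hrhs := (continuousAt_watsonFactor hdn hen).mul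
    (continuousAt_balancedSum ha hqn hbn hcn hwn)
  have hgeneric :=
    eventually_veryWellPoisedSum_eq hq ha1 ha hb hc hd he hqn hbn hcn hdn hen hwn
  exact ((hlhs.eventuallyEq_nhds_iff_eventuallyEq_nhdsNE hrhs).1 hgeneric).eq_of_nhds
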